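/- For every p > 0 there exists a constant C_p > 0 such that for all probability measures ν₀, ν₁ on ℝ^d: 𝒯_p(ν₀, ν₁) ≤ C_p ∑_{n≥0} 2^{pn} ∑_{ℓ≥0} 2^{−pℓ} ∑_{F ∈ 𝒫_ℓ} | ν₀(2ⁿF ∩ B_n) − ν₁(2ⁿF ∩ B_n) |. -/

import Mathlib

open MeasureTheory Filter ENNReal Topology

noncomputable section

/-- The optimal transport cost `𝒯_p(ν₀, ν₁) = inf_{π ∈ 𝒞(ν₀,ν₁)} ∫ |x-y|^p dπ(x,y)`. -/
def Tcost {d : ℕ} (p : ℝ) (ν₀ ν₁ : Measure (EuclideanSpace ℝ (Fin d))) : ℝ≥0∞ :=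
  ⨅ (π : Measure (EuclideanSpace ℝ (Fin d) × EuclideanSpace ℝ (Fin d)))
    (_ : π.map Prod.fst = ν₀) (_ : π.map Prod.snd = ν₁),
      ∫⁻ z, ENNReal.ofReal (‖z.1 - z.2‖ ^ p) ∂π

/-- The cube of the natural partition `𝒫_ℓ` of `(-1,1]^d` into `2^{dℓ}` dyadic cubes of
side-length `2·2^{-ℓ}`, indexed by `k : Fin d → Fin (2^ℓ)`. -/
def dyadicCube (d ℓ : ℕ) (k : Fin d → Fin (2 ^ ℓ)) : Set (EuclideanSpace ℝ (Fin d)) :=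
  {x | ∀ i, x i ∈ Set.Ioc ((-1 : ℝ) + 2 * (2 : ℝ) ^ (-(ℓ : ℝ)) * (k i : ℝ))
      ((-1 : ℝ) + 2 * (2 : ℝ) ^ (-(ℓ : ℝ)) * ((k i : ℝ) + 1))}

/-- The sets `B₀ = (-1,1]^d` and `B_n = (-2ⁿ,2ⁿ]^d \ (-2^{n-1},2^{n-1}]^d` for `n ≥ 1`. -/
def annulus (d n : ℕ) : Set (EuclideanSpace ℝ (Fin d)) :=
  if n = 0 then {x | ∀ i, x i ∈ Set.Ioc (-1 : ℝ) 1}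
  else {x | ∀ i, x i ∈ Set.Ioc (-((2 : ℝ) ^ n)) ((2 : ℝ) ^ n)} \
    {x | ∀ i, x i ∈ Set.Ioc (-((2 : ℝ) ^ (n - 1))) ((2 : ℝ) ^ (n - 1))}

/-- The scaled set `c F = {c x : x ∈ F}`. -/
def scaleSet {d : ℕ} (c : ℝ) (F : Set (EuclideanSpace ℝ (Fin d))) :
    Set (EuclideanSpace ℝ (Fin d)) :=
  (fun x => c • x) '' F

/-!
Cut each measure into two parts: its overlap with the other one relative to the annuli `B_n`, which
puts mass `min (ν₀ B_n) (ν₁ B_n)` on `B_n`, and the excess. The excesses have equal mass, and since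
points of `B_n` have norm at most `√d 2ⁿ`, any coupling of them costs at most a multiple of
`∑_n 2^{pn} |ν₀(B_n) - ν₁(B_n)|`.

The overlaps have the same mass on each annulus, so they may be coupled one annulus at a time. There
mass is matched greedily, first inside the finest cells `2ⁿF`, then inside coarser and coarser ones.
The mass that is left for the cells of generation `ℓ` is the discrepancy at generation `ℓ + 1`, and
it moves by at most their diameter, of order `2^{n-ℓ}`; the mass matched in the finest cells
costs nothing in the limit. Passing from `ν₀, ν₁` to their overlaps adds at most
`|ν₀(B_n) - ν₁(B_n)|` to the discrepancy of each generation, and the weights `2^{-pℓ}` are summable.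
-/

/-- The optimal transport cost between measures on possibly different spaces, for an arbitrary
cost function `c`. It is `∞` when `μ` and `ν` have different masses. -/
def transportCost {X Y : Type*} [MeasurableSpace X] [MeasurableSpace Y] (c : X × Y → ℝ≥0∞)
    (μ : Measure X) (ν : Measure Y) : ℝ≥0∞ :=
  ⨅ (π : Measure (X × Y)) (_ : π.map Prod.fst = μ) (_ : π.map Prod.snd = ν), ∫⁻ z, c z ∂π

section TransportCost

variable {X Y ι : Type*} [MeasurableSpace X] [MeasurableSpace Y] {c : X × Y → ℝ≥0∞}

lemma transportCost_le_lintegral {μ : Measure X} {ν : Measure Y} (π : Measure (X × Y))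
    (hfst : π.map Prod.fst = μ) (hsnd : π.map Prod.snd = ν) :
    transportCost c μ ν ≤ ∫⁻ z, c z ∂π :=
  iInf_le_of_le π (iInf₂_le hfst hsnd)

lemma exists_lintegral_lt_of_transportCost_lt {μ : Measure X} {ν : Measure Y} {b : ℝ≥0∞}
    (h : transportCost c μ ν < b) :
    ∃ π : Measure (X × Y), π.map Prod.fst = μ ∧ π.map Prod.snd = ν ∧ ∫⁻ z, c z ∂π < b := by
  simpa only [transportCost, iInf_lt_iff, exists_prop] using h

lemma transportCost_sum_le [Countable ι] (μ : ι → Measure X) (ν : ι → Measure Y) :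
    transportCost c (Measure.sum μ) (Measure.sum ν) ≤ ∑' i, transportCost c (μ i) (ν i) := by
  refine ENNReal.le_of_forall_pos_le_add fun ε hε hfin => ?_
  obtain ⟨δ, hδ0, hδ⟩ := ENNReal.exists_pos_sum_of_countable' (ENNReal.coe_pos.2 hε).ne' ι
  have hlt (i : ι) : transportCost c (μ i) (ν i) < transportCost c (μ i) (ν i) + δ i :=
    ENNReal.lt_add_right (ENNReal.ne_top_of_tsum_ne_top hfin.ne i) (hδ0 i).ne'
  choose π hfst hsnd hπ using fun i => exists_lintegral_lt_of_transportCost_lt (hlt i)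
  calc transportCost c (Measure.sum μ) (Measure.sum ν)
      ≤ ∫⁻ z, c z ∂(Measure.sum π) := transportCost_le_lintegral _
        (by rw [Measure.map_sum measurable_fst.aemeasurable, funext hfst])
        (by rw [Measure.map_sum measurable_snd.aemeasurable, funext hsnd])
    _ = ∑' i, ∫⁻ z, c z ∂(π i) := lintegral_sum_measure c π
    _ ≤ ∑' i, (transportCost c (μ i) (ν i) + δ i) := ENNReal.tsum_le_tsum fun i => (hπ i).le
    _ = ∑' i, transportCost c (μ i) (ν i) + ∑' i, δ i := ENNReal.tsum_add
    _ ≤ ∑' i, transportCost c (μ i) (ν i) + ε := by gcongr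

lemma transportCost_add_le (μ₁ μ₂ : Measure X) (ν₁ ν₂ : Measure Y) :
    transportCost c (μ₁ + μ₂) (ν₁ + ν₂) ≤ transportCost c μ₁ ν₁ + transportCost c μ₂ ν₂ := by
  simpa [Measure.sum_bool, add_comm] using
    transportCost_sum_le (c := c) (fun b => cond b μ₁ μ₂) (fun b => cond b ν₁ ν₂)

lemma exists_coupling_of_measure_univ_eq (μ : Measure X) (ν : Measure Y) [IsFiniteMeasure μ]
    [IsFiniteMeasure ν] (h : μ Set.univ = ν Set.univ) :
    ∃ π : Measure (X × Y), π ≪ μ.prod ν ∧ π.map Prod.fst = μ ∧ π.map Prod.snd = ν := by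
  rcases eq_or_ne (μ Set.univ) 0 with h0 | h0
  · refine ⟨0, .zero _, ?_, ?_⟩
    · rw [Measure.map_zero, Measure.measure_univ_eq_zero.1 h0]
    · rw [Measure.map_zero, Measure.measure_univ_eq_zero.1 (h.symm.trans h0)]
  · refine ⟨(μ Set.univ)⁻¹ • μ.prod ν, Measure.smul_absolutelyContinuous, ?_, ?_⟩
    · rw [Measure.map_smul, Measure.map_fst_prod, smul_smul, ← h,
        ENNReal.inv_mul_cancel h0 (measure_ne_top _ _), one_smul]
    · rw [Measure.map_smul, Measure.map_snd_prod, smul_smul,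
        ENNReal.inv_mul_cancel h0 (measure_ne_top _ _), one_smul]

lemma transportCost_le_lintegral_add_lintegral {μ : Measure X} {ν : Measure Y} [IsFiniteMeasure μ]
    [IsFiniteMeasure ν] (h : μ Set.univ = ν Set.univ) {s : Set X} {t : Set Y}
    (hμ : ∀ᵐ x ∂μ, x ∈ s) (hν : ∀ᵐ y ∂ν, y ∈ t) {g₁ : X → ℝ≥0∞} {g₂ : Y → ℝ≥0∞}
    (hg₁ : Measurable g₁) (hg₂ : Measurable g₂)
    (hc : ∀ x ∈ s, ∀ y ∈ t, c (x, y) ≤ g₁ x + g₂ y) :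
    transportCost c μ ν ≤ ∫⁻ x, g₁ x ∂μ + ∫⁻ y, g₂ y ∂ν := by
  obtain ⟨π, hπ, hfst, hsnd⟩ := exists_coupling_of_measure_univ_eq μ ν h
  have hcπ : ∀ᵐ z ∂π, c z ≤ g₁ z.1 + g₂ z.2 := by
    refine hπ.ae_le ?_
    filter_upwards [Measure.quasiMeasurePreserving_fst.ae hμ,
      Measure.quasiMeasurePreserving_snd.ae hν] with z hz₁ hz₂ using hc _ hz₁ _ hz₂
  calc transportCost c μ ν ≤ ∫⁻ z, c z ∂π := transportCost_le_lintegral π hfst hsnd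
    _ ≤ ∫⁻ z, g₁ z.1 + g₂ z.2 ∂π := lintegral_mono_ae hcπ
    _ = ∫⁻ z, g₁ z.1 ∂π + ∫⁻ z, g₂ z.2 ∂π :=
        lintegral_add_left (hg₁.comp measurable_fst) _
    _ = ∫⁻ x, g₁ x ∂μ + ∫⁻ y, g₂ y ∂ν := by
        rw [← lintegral_map hg₁ measurable_fst, ← lintegral_map hg₂ measurable_snd, hfst, hsnd]

end TransportCost

section Fibers

variable {X I J : Type*} [MeasurableSpace X]

/-- The part of `μ` that can be matched with `ν` without leaving the fibers of `f`: on each fiber,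
`μ` is scaled down so that its mass becomes the smaller of the masses given by `μ` and `ν`. -/
def fiberOverlap (f : X → I) (μ ν : Measure X) : Measure X :=
  μ.withDensity fun x => min 1 (ν (f ⁻¹' {f x}) / μ (f ⁻¹' {f x}))

/-- The part of `μ` that remains once `fiberOverlap f μ ν` is removed: it lives on the fibers of `f`
to which `μ` gives more mass than `ν`. -/
def fiberExcess (f : X → I) (μ ν : Measure X) : Measure X :=
  μ.withDensity fun x => 1 - ν (f ⁻¹' {f x}) / μ (f ⁻¹' {f x})

/-- The total mass by which `μ` exceeds `ν` on the fibers of `f`, fiber by fiber. It is one-sided: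
the fibers to which `ν` gives more mass contribute `0`. -/
def fiberDiscrepancy (f : X → I) (μ ν : Measure X) : ℝ≥0∞ :=
  ∑' i, (μ (f ⁻¹' {i}) - ν (f ⁻¹' {i}))

variable {f : X → I} {g : X → J} {μ ν : Measure X}

lemma fiberOverlap_le : fiberOverlap f μ ν ≤ μ :=
  (withDensity_mono (.of_forall fun _ => min_le_left _ _)).trans_eq withDensity_one

lemma fiberExcess_le : fiberExcess f μ ν ≤ μ :=
  (withDensity_mono (.of_forall fun _ => tsub_le_self)).trans_eq withDensity_one

instance [IsFiniteMeasure μ] : IsFiniteMeasure (fiberOverlap f μ ν) :=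
  isFiniteMeasure_of_le μ fiberOverlap_le

instance [IsFiniteMeasure μ] : IsFiniteMeasure (fiberExcess f μ ν) :=
  isFiniteMeasure_of_le μ fiberExcess_le

variable [MeasurableSpace I] [MeasurableSingletonClass I]

lemma withDensity_comp_apply_fiber (hf : Measurable f) (μ : Measure X) (w : I → ℝ≥0∞) (i : I) :
    μ.withDensity (fun x => w (f x)) (f ⁻¹' {i}) = w i * μ (f ⁻¹' {i}) := by
  have hm : MeasurableSet (f ⁻¹' {i}) := hf (measurableSet_singleton i)
  rw [withDensity_apply _ hm, ← setLIntegral_const]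
  exact setLIntegral_congr_fun hm fun x hx => congrArg w hx

lemma fiberOverlap_apply_fiber (hf : Measurable f) [IsFiniteMeasure μ] (i : I) :
    fiberOverlap f μ ν (f ⁻¹' {i}) = min (μ (f ⁻¹' {i})) (ν (f ⁻¹' {i})) := by
  refine (withDensity_comp_apply_fiber hf μ
    (fun i => min 1 (ν (f ⁻¹' {i}) / μ (f ⁻¹' {i}))) i).trans ?_
  rcases eq_or_ne (μ (f ⁻¹' {i})) 0 with h0 | h0
  · simp [h0]
  · rw [min_mul, one_mul, ENNReal.div_mul_cancel h0 (measure_ne_top _ _)]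

lemma fiberExcess_apply_fiber (hf : Measurable f) [IsFiniteMeasure μ] (i : I) :
    fiberExcess f μ ν (f ⁻¹' {i}) = μ (f ⁻¹' {i}) - ν (f ⁻¹' {i}) := by
  refine (withDensity_comp_apply_fiber hf μ
    (fun i => 1 - ν (f ⁻¹' {i}) / μ (f ⁻¹' {i})) i).trans ?_
  rcases eq_or_ne (μ (f ⁻¹' {i})) 0 with h0 | h0
  · simp [h0]
  · rw [ENNReal.sub_mul fun _ _ => measure_ne_top _ _, one_mul,
      ENNReal.div_mul_cancel h0 (measure_ne_top _ _)]

variable [Countable I]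

lemma fiberOverlap_add_fiberExcess (hf : Measurable f) (μ ν : Measure X) :
    fiberOverlap f μ ν + fiberExcess f μ ν = μ := by
  have hw : Measurable fun x => min 1 (ν (f ⁻¹' {f x}) / μ (f ⁻¹' {f x})) :=
    (Measurable.of_discrete (f := fun i => min 1 (ν (f ⁻¹' {i}) / μ (f ⁻¹' {i})))).comp hf
  rw [fiberOverlap, fiberExcess, ← withDensity_add_left hw]
  conv_rhs => rw [← withDensity_one (μ := μ)]
  congr 1
  funext x
  exact (add_comm _ _).trans (tsub_add_min ..)

lemma map_fiberOverlap_comm (hf : Measurable f) [IsFiniteMeasure μ] [IsFiniteMeasure ν] :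
    (fiberOverlap f μ ν).map f = (fiberOverlap f ν μ).map f := by
  refine Measure.ext_of_singleton fun i => ?_
  rw [Measure.map_apply hf (measurableSet_singleton i),
    Measure.map_apply hf (measurableSet_singleton i), fiberOverlap_apply_fiber hf,
    fiberOverlap_apply_fiber hf, min_comm]

lemma sum_restrict_fiber (hf : Measurable f) (μ : Measure X) :
    Measure.sum (fun i => μ.restrict (f ⁻¹' {i})) = μ := by
  rw [← Measure.restrict_iUnion (pairwise_disjoint_fiber f)
    (fun i => hf (measurableSet_singleton i)), ← Set.preimage_iUnion,
    Set.iUnion_of_singleton, Set.preimage_univ, Measure.restrict_univ]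

lemma tsum_measure_fiber (hf : Measurable f) (μ : Measure X) :
    ∑' i, μ (f ⁻¹' {i}) = μ Set.univ := by
  conv_rhs => rw [← sum_restrict_fiber hf μ, Measure.sum_apply _ MeasurableSet.univ]
  simp only [Measure.restrict_apply_univ]

lemma fiberExcess_univ (hf : Measurable f) [IsFiniteMeasure μ] :
    fiberExcess f μ ν Set.univ = fiberDiscrepancy f μ ν := by
  simp only [← tsum_measure_fiber hf, fiberExcess_apply_fiber hf, fiberDiscrepancy]

lemma lintegral_comp_fiberExcess (hf : Measurable f) [IsFiniteMeasure μ] (w : I → ℝ≥0∞) :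
    ∫⁻ x, w (f x) ∂(fiberExcess f μ ν) = ∑' i, w i * (μ (f ⁻¹' {i}) - ν (f ⁻¹' {i})) := by
  rw [← lintegral_map .of_discrete hf, lintegral_countable']
  simp only [Measure.map_apply hf (measurableSet_singleton _), fiberExcess_apply_fiber hf]

lemma fiberDiscrepancy_le_add_measure_univ (hf : Measurable f) {μ₁ ν₁ ρ : Measure X} (hμ : μ ≤ μ₁)
    (hν : ν₁ ≤ ν + ρ) : fiberDiscrepancy f μ ν ≤ fiberDiscrepancy f μ₁ ν₁ + ρ Set.univ := by
  rw [← tsum_measure_fiber hf, fiberDiscrepancy, fiberDiscrepancy, ← ENNReal.tsum_add]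
  refine ENNReal.tsum_le_tsum fun i => tsub_le_iff_right.2 ?_
  calc μ (f ⁻¹' {i}) ≤ μ₁ (f ⁻¹' {i}) := hμ _
    _ ≤ μ₁ (f ⁻¹' {i}) - ν₁ (f ⁻¹' {i}) + ν₁ (f ⁻¹' {i}) := le_tsub_add
    _ ≤ μ₁ (f ⁻¹' {i}) - ν₁ (f ⁻¹' {i}) + (ν (f ⁻¹' {i}) + ρ (f ⁻¹' {i})) := by
        gcongr
        exact hν _
    _ = _ := by ring

lemma measure_univ_tsub_le_fiberDiscrepancy (hf : Measurable f) (μ ν : Measure X) :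
    μ Set.univ - ν Set.univ ≤ fiberDiscrepancy f μ ν := by
  rw [tsub_le_iff_right, ← tsum_measure_fiber hf, ← tsum_measure_fiber hf ν, fiberDiscrepancy,
    ← ENNReal.tsum_add]
  exact ENNReal.tsum_le_tsum fun i => le_tsub_add

variable [MeasurableSpace J]

lemma map_eq_map_of_factorsThrough (hf : Measurable f)
    (hgf : g.FactorsThrough f) (h : μ.map f = ν.map f) : μ.map g = ν.map g := by
  rcases isEmpty_or_nonempty X with _ | ⟨⟨x⟩⟩
  · rw [Measure.eq_zero_of_isEmpty μ, Measure.eq_zero_of_isEmpty ν]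
  have : Nonempty J := ⟨g x⟩
  obtain ⟨e, rfl⟩ := (Function.factorsThrough_iff g).1 hgf
  rw [← Measure.map_map .of_discrete hf, h, Measure.map_map .of_discrete hf]

lemma map_fiberExcess_comm (hf : Measurable f) (hg : Measurable g)
    (hgf : g.FactorsThrough f) [IsFiniteMeasure μ] [IsFiniteMeasure ν]
    (h : μ.map g = ν.map g) : (fiberExcess f μ ν).map g = (fiberExcess f ν μ).map g := by
  rw [← Measure.add_right_inj ((fiberOverlap f μ ν).map g), ← Measure.map_add _ _ hg,
    fiberOverlap_add_fiberExcess hf, h,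
    map_eq_map_of_factorsThrough hf hgf (map_fiberOverlap_comm hf), ← Measure.map_add _ _ hg,
    fiberOverlap_add_fiberExcess hf]

lemma fiberExcess_univ_comm (hf : Measurable f) [IsFiniteMeasure μ] [IsFiniteMeasure ν]
    (h : μ Set.univ = ν Set.univ) :
    fiberExcess f μ ν Set.univ = fiberExcess f ν μ Set.univ := by
  have hmap := map_fiberExcess_comm (g := fun _ => ()) (μ := μ) (ν := ν) hf measurable_const
    (fun _ _ _ => rfl) (by rw [Measure.map_const, Measure.map_const, h])
  simpa using congrArg (· Set.univ) hmap

variable [MeasurableSingletonClass J]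

lemma fiberDiscrepancy_fiberExcess (hf : Measurable f) (hg : Measurable g)
    (hgf : g.FactorsThrough f) [IsFiniteMeasure μ] [IsFiniteMeasure ν] :
    fiberDiscrepancy g (fiberExcess f μ ν) (fiberExcess f ν μ) = fiberDiscrepancy g μ ν := by
  have hmap := map_eq_map_of_factorsThrough hf hgf (map_fiberOverlap_comm (μ := μ) (ν := ν) hf)
  refine tsum_congr fun j => ?_
  have hoverlap : fiberOverlap f μ ν (g ⁻¹' {j}) = fiberOverlap f ν μ (g ⁻¹' {j}) := by
    simpa only [Measure.map_apply hg (measurableSet_singleton j)] using congrArg (· {j}) hmap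
  have hμ := DFunLike.congr_fun (fiberOverlap_add_fiberExcess hf μ ν) (g ⁻¹' {j})
  have hν := DFunLike.congr_fun (fiberOverlap_add_fiberExcess hf ν μ) (g ⁻¹' {j})
  rw [Measure.add_apply] at hμ hν
  rw [← hμ, ← hν, hoverlap, ENNReal.add_sub_add_eq_sub_left (measure_ne_top _ _)]

lemma fiberDiscrepancy_restrict_fiberOverlap_le [Countable J] [IsFiniteMeasure ν]
    (hf : Measurable f) (hg : Measurable g) (i : I) :
    fiberDiscrepancy g ((fiberOverlap f μ ν).restrict (f ⁻¹' {i}))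
        ((fiberOverlap f ν μ).restrict (f ⁻¹' {i})) ≤
      fiberDiscrepancy g (μ.restrict (f ⁻¹' {i})) (ν.restrict (f ⁻¹' {i})) +
        (ν (f ⁻¹' {i}) - μ (f ⁻¹' {i})) := by
  have hν : ν.restrict (f ⁻¹' {i}) ≤ (fiberOverlap f ν μ).restrict (f ⁻¹' {i}) +
      (fiberExcess f ν μ).restrict (f ⁻¹' {i}) := by
    rw [← Measure.restrict_add, fiberOverlap_add_fiberExcess hf]
  simpa only [Measure.restrict_apply_univ, fiberExcess_apply_fiber hf] using
    fiberDiscrepancy_le_add_measure_univ hg (Measure.restrict_mono le_rfl fiberOverlap_le) hν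

end Fibers

lemma factorsThrough_of_le {X I : Type*} {f : ℕ → X → I}
    (hnest : ∀ ℓ, (f ℓ).FactorsThrough (f (ℓ + 1))) {k ℓ : ℕ} (hkl : k ≤ ℓ) :
    (f k).FactorsThrough (f ℓ) := by
  induction ℓ, hkl using Nat.le_induction with
  | base => exact fun _ _ h => h
  | succ ℓ _ ih => exact fun _ _ h => ih (hnest ℓ h)

section Refinement

variable {X I : Type*} [MeasurableSpace X] [MeasurableSpace I] [MeasurableSingletonClass I]
  [Countable I] {c : X × X → ℝ≥0∞} {μ ν : Measure X}

lemma transportCost_le_fiberOverlap_add_fiberExcess {f : X → I} (hf : Measurable f) :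
    transportCost c μ ν ≤ transportCost c (fiberOverlap f μ ν) (fiberOverlap f ν μ) +
      transportCost c (fiberExcess f μ ν) (fiberExcess f ν μ) := by
  simpa only [fiberOverlap_add_fiberExcess hf] using transportCost_add_le (c := c)
    (fiberOverlap f μ ν) (fiberExcess f μ ν) (fiberOverlap f ν μ) (fiberExcess f ν μ)

lemma transportCost_fiberOverlap_le_tsum {f : X → I} (hf : Measurable f) :
    transportCost c (fiberOverlap f μ ν) (fiberOverlap f ν μ) ≤
      ∑' i, transportCost c ((fiberOverlap f μ ν).restrict (f ⁻¹' {i}))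
        ((fiberOverlap f ν μ).restrict (f ⁻¹' {i})) := by
  conv_lhs => rw [← sum_restrict_fiber hf (fiberOverlap f μ ν),
    ← sum_restrict_fiber hf (fiberOverlap f ν μ)]
  exact transportCost_sum_le _ _

variable [IsFiniteMeasure μ] [IsFiniteMeasure ν]

lemma transportCost_le_mul_of_map_eq {f : X → I} (hf : Measurable f) {D : ℝ≥0∞}
    (hc : ∀ ⦃x y⦄, f x = f y → c (x, y) ≤ D) (h : μ.map f = ν.map f) :
    transportCost c μ ν ≤ D * μ Set.univ := by
  have hm (i : I) : MeasurableSet (f ⁻¹' {i}) := hf (measurableSet_singleton i)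
  have hmass (i : I) : μ (f ⁻¹' {i}) = ν (f ⁻¹' {i}) := by
    simpa only [Measure.map_apply hf (measurableSet_singleton i)] using congrArg (· {i}) h
  have hfiber (i : I) :
      transportCost c (μ.restrict (f ⁻¹' {i})) (ν.restrict (f ⁻¹' {i})) ≤ D * μ (f ⁻¹' {i}) := by
    simpa using transportCost_le_lintegral_add_lintegral (by simpa using hmass i)
      (ae_restrict_mem (hm i)) (ae_restrict_mem (hm i))
      (measurable_const (a := D)) (measurable_const (a := 0))
      fun x hx y hy => by simpa using hc (hx.trans hy.symm)
  calc transportCost c μ ν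
      = transportCost c (Measure.sum fun i => μ.restrict (f ⁻¹' {i}))
          (Measure.sum fun i => ν.restrict (f ⁻¹' {i})) := by
        rw [sum_restrict_fiber hf, sum_restrict_fiber hf]
    _ ≤ ∑' i, D * μ (f ⁻¹' {i}) :=
        (transportCost_sum_le _ _).trans (ENNReal.tsum_le_tsum hfiber)
    _ = D * μ Set.univ := by rw [ENNReal.tsum_mul_left, tsum_measure_fiber hf]

lemma transportCost_le_mul_add_fiberExcess {f : X → I} (hf : Measurable f) {D : ℝ≥0∞}
    (hc : ∀ ⦃x y⦄, f x = f y → c (x, y) ≤ D) :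
    transportCost c μ ν ≤
      D * μ Set.univ + transportCost c (fiberExcess f μ ν) (fiberExcess f ν μ) := by
  refine (transportCost_le_fiberOverlap_add_fiberExcess hf).trans ?_
  gcongr
  refine (transportCost_le_mul_of_map_eq hf hc (map_fiberOverlap_comm hf)).trans ?_
  gcongr
  exact fiberOverlap_le

lemma transportCost_le_add_sum_fiberDiscrepancy {f : ℕ → X → I} (hf : ∀ ℓ, Measurable (f ℓ))
    (hnest : ∀ ℓ, (f ℓ).FactorsThrough (f (ℓ + 1))) {D : ℕ → ℝ≥0∞}
    (hc : ∀ ℓ ⦃x y⦄, f ℓ x = f ℓ y → c (x, y) ≤ D ℓ) (h0 : μ.map (f 0) = ν.map (f 0)) (L : ℕ) :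
    transportCost c μ ν ≤
      D L * μ Set.univ + ∑ ℓ ∈ Finset.range L, D ℓ * fiberDiscrepancy (f (ℓ + 1)) μ ν := by
  induction L generalizing μ ν with
  | zero => simpa using transportCost_le_mul_of_map_eq (hf 0) (hc 0) h0
  | succ L ih =>
    -- Match as much as possible inside the finest cells. As this removes equal amounts of `μ` and
    -- `ν` from every coarser cell, the excess has the same discrepancies as `μ` and `ν` there.
    have hcoarse (ℓ : ℕ) (hℓ : ℓ ≤ L + 1) : (f ℓ).FactorsThrough (f (L + 1)) :=
      factorsThrough_of_le hnest hℓ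
    have hexcess := ih (μ := fiberExcess (f (L + 1)) μ ν) (ν := fiberExcess (f (L + 1)) ν μ)
      (map_fiberExcess_comm (hf _) (hf 0) (hcoarse 0 (Nat.zero_le _)) h0)
    have hsum : ∑ ℓ ∈ Finset.range L, D ℓ * fiberDiscrepancy (f (ℓ + 1))
          (fiberExcess (f (L + 1)) μ ν) (fiberExcess (f (L + 1)) ν μ) =
        ∑ ℓ ∈ Finset.range L, D ℓ * fiberDiscrepancy (f (ℓ + 1)) μ ν :=
      Finset.sum_congr rfl fun ℓ hℓ => by
        rw [fiberDiscrepancy_fiberExcess (hf _) (hf _)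
          (hcoarse (ℓ + 1) (Nat.succ_le_succ (Finset.mem_range.1 hℓ).le))]
    rw [fiberExcess_univ (hf _), hsum, add_comm (D L * _), ← Finset.sum_range_succ] at hexcess
    exact (transportCost_le_mul_add_fiberExcess (hf _) (hc _)).trans (by gcongr)

lemma transportCost_le_tsum_fiberDiscrepancy {f : ℕ → X → I} (hf : ∀ ℓ, Measurable (f ℓ))
    (hnest : ∀ ℓ, (f ℓ).FactorsThrough (f (ℓ + 1))) {D : ℕ → ℝ≥0∞}
    (hD : Tendsto D atTop (𝓝 0)) (hc : ∀ ℓ ⦃x y⦄, f ℓ x = f ℓ y → c (x, y) ≤ D ℓ)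
    (h0 : μ.map (f 0) = ν.map (f 0)) :
    transportCost c μ ν ≤ ∑' ℓ, D ℓ * fiberDiscrepancy (f (ℓ + 1)) μ ν := by
  have hlim : Tendsto (fun L => D L * μ Set.univ +
      ∑' ℓ, D ℓ * fiberDiscrepancy (f (ℓ + 1)) μ ν) atTop
      (𝓝 (0 * μ Set.univ + ∑' ℓ, D ℓ * fiberDiscrepancy (f (ℓ + 1)) μ ν)) :=
    (ENNReal.Tendsto.mul_const hD (.inr (measure_ne_top _ _))).add_const _
  rw [zero_mul, zero_add] at hlim
  refine ge_of_tendsto' hlim fun L => ?_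
  refine (transportCost_le_add_sum_fiberDiscrepancy hf hnest hc h0 L).trans ?_
  gcongr
  exact ENNReal.sum_le_tsum _

lemma transportCost_fiberExcess_le {f : X → I} (hf : Measurable f) {w : I → ℝ≥0∞}
    (hc : ∀ x y, c (x, y) ≤ w (f x) + w (f y)) (h : μ Set.univ = ν Set.univ) :
    transportCost c (fiberExcess f μ ν) (fiberExcess f ν μ) ≤
      ∑' i, w i * (μ (f ⁻¹' {i}) - ν (f ⁻¹' {i})) +
        ∑' i, w i * (ν (f ⁻¹' {i}) - μ (f ⁻¹' {i})) := by
  have hw : Measurable fun x => w (f x) := Measurable.of_discrete.comp hf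
  simpa only [lintegral_comp_fiberExcess hf] using transportCost_le_lintegral_add_lintegral
    (fiberExcess_univ_comm hf h) (.of_forall Set.mem_univ) (.of_forall Set.mem_univ) hw hw
    fun x _ y _ => hc x y

end Refinement

section ENNReal

lemma tsum_pow_mul_succ_add_le {r : ℝ≥0∞} (h0 : r ≠ 0) (htop : r ≠ ∞) (a : ℕ → ℝ≥0∞) :
    ∑' ℓ, r ^ ℓ * (a (ℓ + 1) + a 0) ≤ (r⁻¹ + (1 - r)⁻¹) * ∑' ℓ, r ^ ℓ * a ℓ := by
  have hsplit : ∑' ℓ, r ^ ℓ * a ℓ = a 0 + r * ∑' ℓ, r ^ ℓ * a (ℓ + 1) := by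
    rw [tsum_eq_zero_add' ENNReal.summable, pow_zero, one_mul, ← ENNReal.tsum_mul_left]
    simp only [pow_succ', mul_assoc]
  have hfirst : a 0 ≤ ∑' ℓ, r ^ ℓ * a ℓ := hsplit ▸ le_self_add
  have htail : r * ∑' ℓ, r ^ ℓ * a (ℓ + 1) ≤ ∑' ℓ, r ^ ℓ * a ℓ := hsplit ▸ le_add_self
  simp only [mul_add, add_mul, ENNReal.tsum_add, ENNReal.tsum_mul_right, ENNReal.tsum_geometric]
  gcongr
  rwa [← ENNReal.mul_le_iff_le_inv h0 htop]

lemma tsub_le_ofReal_abs_toReal_sub {a b : ℝ≥0∞} (ha : a ≠ ∞) (hb : b ≠ ∞) :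
    a - b ≤ ENNReal.ofReal |a.toReal - b.toReal| := by
  conv_lhs => rw [← ENNReal.ofReal_toReal ha, ← ENNReal.ofReal_toReal hb,
    ← ENNReal.ofReal_sub _ ENNReal.toReal_nonneg]
  exact ENNReal.ofReal_le_ofReal (le_abs_self _)

lemma ofReal_two_rpow_neg_mul_natCast (p : ℝ) (ℓ : ℕ) :
    ENNReal.ofReal ((2 : ℝ) ^ (-(p * ℓ))) = ENNReal.ofReal ((2 : ℝ) ^ (-p)) ^ ℓ := by
  rw [← ENNReal.ofReal_pow (by positivity), ← Real.rpow_mul_natCast zero_le_two, neg_mul]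

lemma ofReal_two_rpow_neg_lt_one {p : ℝ} (hp : 0 < p) : ENNReal.ofReal ((2 : ℝ) ^ (-p)) < 1 := by
  rw [← ENNReal.ofReal_one, ENNReal.ofReal_lt_ofReal_iff one_pos]
  exact Real.rpow_lt_one_of_one_lt_of_neg one_lt_two (neg_neg_of_pos hp)

end ENNReal

section Annuli

variable {d : ℕ}

/-- The cube `(-2ⁿ, 2ⁿ]^d`. The annuli `B_n` are the successive differences of these cubes. -/
def box (d n : ℕ) : Set (EuclideanSpace ℝ (Fin d)) :=
  {x | ∀ i, x i ∈ Set.Ioc (-((2 : ℝ) ^ n)) ((2 : ℝ) ^ n)}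

lemma measurableSet_box (n : ℕ) : MeasurableSet (box d n) := by
  have : box d n = ⋂ i, (fun x : EuclideanSpace ℝ (Fin d) => x i) ⁻¹'
      Set.Ioc (-((2 : ℝ) ^ n)) ((2 : ℝ) ^ n) := by
    ext; simp [box]
  rw [this]
  exact MeasurableSet.iInter fun i => measurableSet_Ioc.preimage (by fun_prop)

lemma monotone_box : Monotone (box d) := by
  intro m n hmn x hx i
  have h : (2 : ℝ) ^ m ≤ 2 ^ n := pow_le_pow_right₀ one_le_two hmn
  exact ⟨(neg_le_neg h).trans_lt (hx i).1, (hx i).2.trans h⟩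

lemma exists_mem_box (x : EuclideanSpace ℝ (Fin d)) : ∃ n, x ∈ box d n := by
  obtain ⟨n, hn⟩ := pow_unbounded_of_one_lt ‖x‖ (one_lt_two (α := ℝ))
  refine ⟨n, fun i => ?_⟩
  have := abs_lt.1 ((PiLp.norm_apply_le x i).trans_lt hn)
  exact ⟨this.1, this.2.le⟩

lemma norm_le_sqrt_mul {x : EuclideanSpace ℝ (Fin d)} {r : ℝ} (hr : 0 ≤ r)
    (h : ∀ i, |x i| ≤ r) : ‖x‖ ≤ √d * r := by
  rw [EuclideanSpace.norm_eq]
  refine Real.sqrt_le_iff.2 ⟨by positivity, ?_⟩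
  rw [mul_pow, Real.sq_sqrt (Nat.cast_nonneg d)]
  calc ∑ i, ‖x i‖ ^ 2 ≤ ∑ _i : Fin d, r ^ 2 :=
        Finset.sum_le_sum fun i _ => pow_le_pow_left₀ (norm_nonneg _) (h i) 2
    _ = d * r ^ 2 := by simp

lemma norm_le_of_mem_box {n : ℕ} {x : EuclideanSpace ℝ (Fin d)} (hx : x ∈ box d n) :
    ‖x‖ ≤ √d * 2 ^ n :=
  norm_le_sqrt_mul (by positivity) fun i => abs_le.2 ⟨(hx i).1.le, (hx i).2⟩

lemma annulus_eq_disjointed : annulus d = disjointed (box d) := by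
  funext n
  cases n with
  | zero => simp [annulus, box]
  | succ n =>
    rw [← Order.succ_eq_add_one, monotone_box.disjointed_succ (not_isMax n)]
    simp [annulus, box]

lemma annulus_subset_box (n : ℕ) : annulus d n ⊆ box d n :=
  annulus_eq_disjointed (d := d) ▸ disjointed_le _ n

open scoped Classical in
/-- The index `n` of the annulus `B_n` that contains `x`. It makes the annuli the fibers of a
measurable map. -/
def annulusIndex (d : ℕ) (x : EuclideanSpace ℝ (Fin d)) : ℕ :=
  Nat.find (exists_mem_box x)

lemma measurable_annulusIndex : Measurable (annulusIndex d) := by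
  classical exact measurable_find _ measurableSet_box

lemma preimage_annulusIndex (n : ℕ) : annulusIndex d ⁻¹' {n} = annulus d n := by
  rw [annulus_eq_disjointed]
  classical exact preimage_find_eq_disjointed _ exists_mem_box n

lemma measurableSet_annulus (n : ℕ) : MeasurableSet (annulus d n) :=
  preimage_annulusIndex (d := d) n ▸ measurable_annulusIndex (measurableSet_singleton n)

lemma norm_le_annulusIndex (x : EuclideanSpace ℝ (Fin d)) : ‖x‖ ≤ √d * 2 ^ annulusIndex d x := by
  classical exact norm_le_of_mem_box (Nat.find_spec (exists_mem_box x))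

lemma norm_sub_rpow_le_add_annulusIndex {p : ℝ} (hp : 0 ≤ p) (x y : EuclideanSpace ℝ (Fin d)) :
    ENNReal.ofReal (‖x - y‖ ^ p) ≤
      ENNReal.ofReal ((2 * √d) ^ p) * ENNReal.ofReal ((2 : ℝ) ^ (p * annulusIndex d x)) +
        ENNReal.ofReal ((2 * √d) ^ p) * ENNReal.ofReal ((2 : ℝ) ^ (p * annulusIndex d y)) := by
  wlog hxy : annulusIndex d y ≤ annulusIndex d x generalizing x y
  · rw [norm_sub_rev, add_comm]
    exact this y x (le_of_not_ge hxy)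
  refine le_add_right ?_
  have hpow : (2 : ℝ) ^ annulusIndex d y ≤ 2 ^ annulusIndex d x :=
    pow_le_pow_right₀ one_le_two hxy
  have hnorm : ‖x - y‖ ≤ 2 * √d * 2 ^ annulusIndex d x := by
    calc ‖x - y‖ ≤ ‖x‖ + ‖y‖ := norm_sub_le x y
      _ ≤ √d * 2 ^ annulusIndex d x + √d * 2 ^ annulusIndex d x :=
        add_le_add (norm_le_annulusIndex x) ((norm_le_annulusIndex y).trans (by gcongr))
      _ = 2 * √d * 2 ^ annulusIndex d x := by ring
  rw [← ENNReal.ofReal_mul (by positivity), mul_comm p, Real.rpow_natCast_mul zero_le_two,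
    ← Real.mul_rpow (by positivity) (by positivity)]
  exact ENNReal.ofReal_le_ofReal (Real.rpow_le_rpow (norm_nonneg _) hnorm hp)

end Annuli

section Cells

variable {d : ℕ}

/-- The position, in the grid of mesh `2·2ⁿ/2^ℓ`, of the cell that contains `x`. Cells are
half-open on the left, hence the ceiling, and the cells of the cube `(-2ⁿ, 2ⁿ]^d` have coordinates
`1, …, 2^ℓ`. -/
def cellIndex (d n ℓ : ℕ) (x : EuclideanSpace ℝ (Fin d)) (i : Fin d) : ℤ :=
  ⌈(x i / 2 ^ n + 1) * 2 ^ ℓ / 2⌉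

lemma measurable_cellIndex (n ℓ : ℕ) : Measurable (cellIndex d n ℓ) :=
  measurable_pi_lambda _ fun _ => Int.measurable_ceil.comp (by fun_prop)

lemma ceil_le_ceil_of_ceil_two_mul_eq {u v : ℝ} (h : ⌈2 * u⌉ = ⌈2 * v⌉) : ⌈u⌉ ≤ ⌈v⌉ := by
  have hv : ⌈2 * v⌉ ≤ 2 * ⌈v⌉ := Int.ceil_le.2 (by push_cast; linarith [Int.le_ceil v])
  have hu : 2 * u ≤ ((2 * ⌈v⌉ : ℤ) : ℝ) := Int.ceil_le.1 (h ▸ hv)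
  push_cast at hu
  exact Int.ceil_le.2 (by linarith)

lemma cellIndex_factorsThrough_succ (n ℓ : ℕ) :
    (cellIndex d n ℓ).FactorsThrough (cellIndex d n (ℓ + 1)) := by
  intro x y h
  have hdouble (z : EuclideanSpace ℝ (Fin d)) (i : Fin d) :
      cellIndex d n (ℓ + 1) z i = ⌈2 * ((z i / 2 ^ n + 1) * 2 ^ ℓ / 2)⌉ :=
    congrArg Int.ceil (by ring)
  funext i
  have hi := congrFun h i
  rw [hdouble, hdouble] at hi
  exact (ceil_le_ceil_of_ceil_two_mul_eq hi).antisymm (ceil_le_ceil_of_ceil_two_mul_eq hi.symm)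

lemma scaleSet_dyadicCube (n ℓ : ℕ) (k : Fin d → Fin (2 ^ ℓ)) :
    scaleSet ((2 : ℝ) ^ n) (dyadicCube d ℓ k) =
      cellIndex d n ℓ ⁻¹' {fun i => (k i : ℤ) + 1} := by
  have hn : (0 : ℝ) < 2 ^ n := by positivity
  have hℓ : (0 : ℝ) < 2 ^ ℓ := by positivity
  ext x
  have hscale : x ∈ scaleSet ((2 : ℝ) ^ n) (dyadicCube d ℓ k) ↔
      ((2 : ℝ) ^ n)⁻¹ • x ∈ dyadicCube d ℓ k :=
    Set.mem_smul_set_iff_inv_smul_mem₀ hn.ne' _ x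
  rw [hscale, Set.mem_preimage, Set.mem_singleton_iff, funext_iff]
  refine forall_congr' fun i => ?_
  have hcoord : (((2 : ℝ) ^ n)⁻¹ • x) i = x i / 2 ^ n := by
    rw [PiLp.smul_apply, smul_eq_mul, inv_mul_eq_div]
  have hend (u : ℝ) : -1 + 2 * (2 : ℝ) ^ (-(ℓ : ℝ)) * u = 2 * u / 2 ^ ℓ - 1 := by
    rw [Real.rpow_neg zero_le_two, Real.rpow_natCast]
    field_simp
    ring
  rw [hcoord, hend, hend, cellIndex, Int.ceil_eq_iff, Set.mem_Ioc, sub_lt_iff_lt_add,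
    div_lt_iff₀ hℓ, le_sub_iff_add_le, le_div_iff₀ hℓ]
  push_cast
  constructor <;> rintro ⟨_, _⟩ <;> constructor <;> linarith

lemma cellIndex_mem_Icc {n ℓ : ℕ} {x : EuclideanSpace ℝ (Fin d)} (hx : x ∈ box d n) (i : Fin d) :
    cellIndex d n ℓ x i ∈ Set.Icc 1 (2 ^ ℓ) := by
  have hn : (0 : ℝ) < 2 ^ n := by positivity
  have hℓ : (0 : ℝ) < 2 ^ ℓ := by positivity
  have hlower : 0 < x i / 2 ^ n + 1 := by
    rw [← neg_lt_iff_pos_add, lt_div_iff₀ hn]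
    linarith [(hx i).1]
  have hupper : x i / 2 ^ n ≤ 1 := (div_le_one hn).2 (hx i).2
  refine ⟨Int.ceil_pos.2 (by positivity), Int.ceil_le.2 ?_⟩
  push_cast
  nlinarith

lemma exists_cellIndex_eq {n ℓ : ℕ} {x : EuclideanSpace ℝ (Fin d)} (hx : x ∈ box d n) :
    ∃ k : Fin d → Fin (2 ^ ℓ), cellIndex d n ℓ x = fun i => (k i : ℤ) + 1 := by
  have hcoord (i : Fin d) : ∃ m : Fin (2 ^ ℓ), cellIndex d n ℓ x i = m + 1 := by
    obtain ⟨h1, h2⟩ := cellIndex_mem_Icc (ℓ := ℓ) hx i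
    refine ⟨⟨(cellIndex d n ℓ x i - 1).toNat, ?_⟩, ?_⟩
    · zify
      omega
    · simp only
      omega
  choose k hk using hcoord
  exact ⟨k, funext hk⟩

lemma map_cellIndex_zero_restrict_annulus (μ : Measure (EuclideanSpace ℝ (Fin d))) (n : ℕ) :
    (μ.restrict (annulus d n)).map (cellIndex d n 0) = μ (annulus d n) • Measure.dirac 1 := by
  have hone : cellIndex d n 0 =ᵐ[μ.restrict (annulus d n)] fun _ => 1 := by
    filter_upwards [ae_restrict_mem (measurableSet_annulus n)] with x hx
    funext i
    obtain ⟨h1, h2⟩ := cellIndex_mem_Icc (ℓ := 0) (annulus_subset_box n hx) i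
    exact h2.antisymm h1
  rw [Measure.map_congr hone, Measure.map_const, Measure.restrict_apply_univ]

lemma norm_sub_le_of_cellIndex_eq {n ℓ : ℕ} {x y : EuclideanSpace ℝ (Fin d)}
    (h : cellIndex d n ℓ x = cellIndex d n ℓ y) : ‖x - y‖ ≤ √d * (2 * 2 ^ n / 2 ^ ℓ) := by
  refine norm_le_sqrt_mul (by positivity) fun i => ?_
  have hlt := Int.abs_sub_lt_one_of_floor_eq_floor (R := ℝ)
    (a := -((x i / 2 ^ n + 1) * 2 ^ ℓ / 2)) (b := -((y i / 2 ^ n + 1) * 2 ^ ℓ / 2))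
    (by rw [Int.floor_neg, Int.floor_neg]; exact congrArg _ (congrFun h i))
  have hsub : (x - y) i = (-((y i / 2 ^ n + 1) * 2 ^ ℓ / 2) - -((x i / 2 ^ n + 1) * 2 ^ ℓ / 2)) *
      (2 * 2 ^ n / 2 ^ ℓ) := by
    rw [PiLp.sub_apply]
    field_simp
    ring
  rw [abs_sub_comm] at hlt
  rw [hsub, abs_mul, abs_of_nonneg (a := 2 * (2 : ℝ) ^ n / 2 ^ ℓ) (by positivity)]
  exact mul_le_of_le_one_left (by positivity) hlt.le

lemma norm_sub_rpow_le_of_cellIndex_eq {p : ℝ} (hp : 0 ≤ p) {n ℓ : ℕ}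
    {x y : EuclideanSpace ℝ (Fin d)} (h : cellIndex d n ℓ x = cellIndex d n ℓ y) :
    ENNReal.ofReal (‖x - y‖ ^ p) ≤
      ENNReal.ofReal ((2 * √d) ^ p) * ENNReal.ofReal ((2 : ℝ) ^ (p * n)) *
        ENNReal.ofReal ((2 : ℝ) ^ (-p)) ^ ℓ := by
  have hnorm : ‖x - y‖ ≤ 2 * √d * 2 ^ n * (2 ^ ℓ)⁻¹ :=
    (norm_sub_le_of_cellIndex_eq h).trans_eq (by ring)
  have hrpow : (2 * √d * 2 ^ n * (2 ^ ℓ)⁻¹) ^ p =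
      (2 * √d) ^ p * (2 : ℝ) ^ (p * n) * (2 : ℝ) ^ (-(p * ℓ)) := by
    rw [Real.mul_rpow (by positivity) (by positivity),
      Real.mul_rpow (by positivity) (by positivity), Real.inv_rpow (by positivity),
      Real.rpow_neg zero_le_two, mul_comm p n, mul_comm p ℓ, Real.rpow_natCast_mul zero_le_two,
      Real.rpow_natCast_mul zero_le_two]
  rw [← ofReal_two_rpow_neg_mul_natCast, ← ENNReal.ofReal_mul (by positivity),
    ← ENNReal.ofReal_mul (by positivity), ← hrpow]
  exact ENNReal.ofReal_le_ofReal (Real.rpow_le_rpow (norm_nonneg _) hnorm hp)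

end Cells

section Discrepancies

variable {d : ℕ} (p : ℝ) (ν₀ ν₁ : Measure (EuclideanSpace ℝ (Fin d)))

/-- The discrepancy `∑_{F ∈ 𝒫_ℓ} |ν₀(2ⁿF ∩ B_n) - ν₁(2ⁿF ∩ B_n)|` of generation `ℓ` in the annulus
`B_n`. -/
def cellDiscrepancy (n ℓ : ℕ) : ℝ≥0∞ :=
  ∑ k : Fin d → Fin (2 ^ ℓ),
    ENNReal.ofReal
      |(ν₀ (scaleSet ((2:ℝ) ^ n) (dyadicCube d ℓ k) ∩ annulus d n)).toReal -
       (ν₁ (scaleSet ((2:ℝ) ^ n) (dyadicCube d ℓ k) ∩ annulus d n)).toReal|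

/-- The contribution `2^{pn} ∑_ℓ 2^{-pℓ} ∑_{F ∈ 𝒫_ℓ} |ν₀(2ⁿF ∩ B_n) - ν₁(2ⁿF ∩ B_n)|` of the
annulus `B_n` to the bound. -/
def annulusDiscrepancy (n : ℕ) : ℝ≥0∞ :=
  ENNReal.ofReal ((2 : ℝ) ^ (p * n)) *
    ∑' ℓ : ℕ, ENNReal.ofReal ((2 : ℝ) ^ (-(p * ℓ))) * cellDiscrepancy ν₀ ν₁ n ℓ

lemma cellDiscrepancy_comm (n ℓ : ℕ) : cellDiscrepancy ν₀ ν₁ n ℓ = cellDiscrepancy ν₁ ν₀ n ℓ := by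
  simp only [cellDiscrepancy, abs_sub_comm]

lemma annulusDiscrepancy_comm (n : ℕ) :
    annulusDiscrepancy p ν₀ ν₁ n = annulusDiscrepancy p ν₁ ν₀ n := by
  simp only [annulusDiscrepancy, cellDiscrepancy_comm ν₀ ν₁]

lemma annulusDiscrepancy_eq_mul_tsum_pow (n : ℕ) :
    annulusDiscrepancy p ν₀ ν₁ n = ENNReal.ofReal ((2 : ℝ) ^ (p * n)) *
      ∑' ℓ : ℕ, ENNReal.ofReal ((2 : ℝ) ^ (-p)) ^ ℓ * cellDiscrepancy ν₀ ν₁ n ℓ := by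
  simp only [annulusDiscrepancy, ofReal_two_rpow_neg_mul_natCast]

variable [IsFiniteMeasure ν₀] [IsFiniteMeasure ν₁]

lemma fiberDiscrepancy_cellIndex_le_cellDiscrepancy (n ℓ : ℕ) :
    fiberDiscrepancy (cellIndex d n ℓ) (ν₀.restrict (annulus d n)) (ν₁.restrict (annulus d n)) ≤
      cellDiscrepancy ν₀ ν₁ n ℓ := by
  have hinj : Function.Injective fun (k : Fin d → Fin (2 ^ ℓ)) (i : Fin d) => (k i : ℤ) + 1 :=
    fun k k' h => funext fun i =>
      Fin.ext (Int.ofNat_injective (add_left_injective 1 (congrFun h i)))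
  rw [fiberDiscrepancy, ← hinj.tsum_eq, tsum_fintype]
  · refine Finset.sum_le_sum fun k _ => ?_
    rw [← scaleSet_dyadicCube, Measure.restrict_apply' (measurableSet_annulus n),
      Measure.restrict_apply' (measurableSet_annulus n)]
    exact tsub_le_ofReal_abs_toReal_sub (measure_ne_top _ _) (measure_ne_top _ _)
  · refine Function.support_subset_iff'.2 fun j hj => ?_
    have hempty : cellIndex d n ℓ ⁻¹' {j} ∩ annulus d n = ∅ := by
      refine Set.eq_empty_of_forall_notMem fun x ⟨hx, hxn⟩ => hj ?_
      obtain ⟨k, hk⟩ := exists_cellIndex_eq (ℓ := ℓ) (annulus_subset_box n hxn)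
      exact ⟨k, hk.symm.trans hx⟩
    rw [Measure.restrict_apply' (measurableSet_annulus n), hempty, measure_empty, zero_tsub]

lemma measure_annulus_tsub_le_cellDiscrepancy (n ℓ : ℕ) :
    ν₀ (annulus d n) - ν₁ (annulus d n) ≤ cellDiscrepancy ν₀ ν₁ n ℓ := by
  simpa only [Measure.restrict_apply_univ] using
    (measure_univ_tsub_le_fiberDiscrepancy (measurable_cellIndex n ℓ) _ _).trans
      (fiberDiscrepancy_cellIndex_le_cellDiscrepancy ν₀ ν₁ n ℓ)

lemma mul_measure_annulus_tsub_le_annulusDiscrepancy (n : ℕ) :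
    ENNReal.ofReal ((2 : ℝ) ^ (p * n)) * (ν₀ (annulus d n) - ν₁ (annulus d n)) ≤
      annulusDiscrepancy p ν₀ ν₁ n := by
  rw [annulusDiscrepancy_eq_mul_tsum_pow]
  gcongr
  refine (measure_annulus_tsub_le_cellDiscrepancy ν₀ ν₁ n 0).trans ?_
  simpa using ENNReal.le_tsum (f := fun ℓ =>
    ENNReal.ofReal ((2 : ℝ) ^ (-p)) ^ ℓ * cellDiscrepancy ν₀ ν₁ n ℓ) 0

end Discrepancies

section DyadicBound

variable {d : ℕ} {p : ℝ} (ν₀ ν₁ : Measure (EuclideanSpace ℝ (Fin d))) [IsFiniteMeasure ν₀]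
  [IsFiniteMeasure ν₁]

lemma fiberDiscrepancy_restrict_overlap_le (n ℓ : ℕ) :
    fiberDiscrepancy (cellIndex d n ℓ)
        ((fiberOverlap (annulusIndex d) ν₀ ν₁).restrict (annulus d n))
        ((fiberOverlap (annulusIndex d) ν₁ ν₀).restrict (annulus d n)) ≤
      cellDiscrepancy ν₀ ν₁ n ℓ + cellDiscrepancy ν₀ ν₁ n 0 := by
  have h := fiberDiscrepancy_restrict_fiberOverlap_le (μ := ν₀) (ν := ν₁) measurable_annulusIndex
    (measurable_cellIndex n ℓ) n
  rw [preimage_annulusIndex] at h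
  refine h.trans (add_le_add (fiberDiscrepancy_cellIndex_le_cellDiscrepancy ν₀ ν₁ n ℓ) ?_)
  rw [cellDiscrepancy_comm]
  exact measure_annulus_tsub_le_cellDiscrepancy ν₁ ν₀ n 0

lemma map_cellIndex_zero_restrict_overlap_comm (n : ℕ) :
    ((fiberOverlap (annulusIndex d) ν₀ ν₁).restrict (annulus d n)).map (cellIndex d n 0) =
      ((fiberOverlap (annulusIndex d) ν₁ ν₀).restrict (annulus d n)).map (cellIndex d n 0) := by
  rw [map_cellIndex_zero_restrict_annulus, map_cellIndex_zero_restrict_annulus,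
    ← preimage_annulusIndex, fiberOverlap_apply_fiber measurable_annulusIndex,
    fiberOverlap_apply_fiber measurable_annulusIndex, min_comm]

lemma Tcost_restrict_overlap_le (hp : 0 < p) (n : ℕ) :
    Tcost p ((fiberOverlap (annulusIndex d) ν₀ ν₁).restrict (annulus d n))
        ((fiberOverlap (annulusIndex d) ν₁ ν₀).restrict (annulus d n)) ≤
      ENNReal.ofReal ((2 * √d) ^ p) *
        ((ENNReal.ofReal ((2 : ℝ) ^ (-p)))⁻¹ + (1 - ENNReal.ofReal ((2 : ℝ) ^ (-p)))⁻¹) *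
          annulusDiscrepancy p ν₀ ν₁ n := by
  rw [annulusDiscrepancy_eq_mul_tsum_pow]
  set r := ENNReal.ofReal ((2 : ℝ) ^ (-p))
  set K := ENNReal.ofReal ((2 * √d) ^ p)
  set w := ENNReal.ofReal ((2 : ℝ) ^ (p * n))
  have hr0 : r ≠ 0 := (ENNReal.ofReal_pos.2 (by positivity)).ne'
  have hdecay : Tendsto (fun ℓ : ℕ => K * w * r ^ ℓ) atTop (𝓝 0) := by
    simpa using ENNReal.Tendsto.const_mul
      (ENNReal.tendsto_pow_atTop_nhds_zero_of_lt_one (ofReal_two_rpow_neg_lt_one hp))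
      (.inr (ENNReal.mul_ne_top ENNReal.ofReal_ne_top ENNReal.ofReal_ne_top))
  calc _ ≤ ∑' ℓ, K * w * r ^ ℓ * fiberDiscrepancy (cellIndex d n (ℓ + 1))
          ((fiberOverlap (annulusIndex d) ν₀ ν₁).restrict (annulus d n))
          ((fiberOverlap (annulusIndex d) ν₁ ν₀).restrict (annulus d n)) :=
        transportCost_le_tsum_fiberDiscrepancy (measurable_cellIndex n)
          (cellIndex_factorsThrough_succ n) hdecay
          (fun _ _ _ h => norm_sub_rpow_le_of_cellIndex_eq hp.le h)
          (map_cellIndex_zero_restrict_overlap_comm ν₀ ν₁ n)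
    _ ≤ ∑' ℓ, K * w * r ^ ℓ * (cellDiscrepancy ν₀ ν₁ n (ℓ + 1) + cellDiscrepancy ν₀ ν₁ n 0) := by
        gcongr with ℓ
        exact fiberDiscrepancy_restrict_overlap_le ν₀ ν₁ n (ℓ + 1)
    _ ≤ K * w * ((r⁻¹ + (1 - r)⁻¹) * ∑' ℓ, r ^ ℓ * cellDiscrepancy ν₀ ν₁ n ℓ) := by
        simp only [mul_assoc (K * w), ENNReal.tsum_mul_left]
        gcongr
        exact tsum_pow_mul_succ_add_le hr0 ENNReal.ofReal_ne_top _
    _ = _ := by ring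

lemma Tcost_overlap_le (hp : 0 < p) :
    Tcost p (fiberOverlap (annulusIndex d) ν₀ ν₁) (fiberOverlap (annulusIndex d) ν₁ ν₀) ≤
      ENNReal.ofReal ((2 * √d) ^ p) *
        ((ENNReal.ofReal ((2 : ℝ) ^ (-p)))⁻¹ + (1 - ENNReal.ofReal ((2 : ℝ) ^ (-p)))⁻¹) *
          ∑' n, annulusDiscrepancy p ν₀ ν₁ n := by
  refine (transportCost_fiberOverlap_le_tsum measurable_annulusIndex).trans ?_
  rw [← ENNReal.tsum_mul_left]
  refine ENNReal.tsum_le_tsum fun n => ?_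
  rw [preimage_annulusIndex]
  exact Tcost_restrict_overlap_le ν₀ ν₁ hp n

lemma Tcost_excess_le (hp : 0 ≤ p) (h : ν₀ Set.univ = ν₁ Set.univ) :
    Tcost p (fiberExcess (annulusIndex d) ν₀ ν₁) (fiberExcess (annulusIndex d) ν₁ ν₀) ≤
      ENNReal.ofReal ((2 * √d) ^ p) * 2 * ∑' n, annulusDiscrepancy p ν₀ ν₁ n := by
  have hside (μ ν : Measure (EuclideanSpace ℝ (Fin d))) [IsFiniteMeasure μ] [IsFiniteMeasure ν] :
      ∑' n : ℕ, ENNReal.ofReal ((2 * √d) ^ p) * ENNReal.ofReal ((2 : ℝ) ^ (p * n)) *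
          (μ (annulus d n) - ν (annulus d n)) ≤
        ENNReal.ofReal ((2 * √d) ^ p) * ∑' n, annulusDiscrepancy p μ ν n := by
    simp only [mul_assoc, ENNReal.tsum_mul_left]
    gcongr with n
    exact mul_measure_annulus_tsub_le_annulusDiscrepancy p μ ν n
  have hcost := transportCost_fiberExcess_le measurable_annulusIndex
    (c := fun z => ENNReal.ofReal (‖z.1 - z.2‖ ^ p)) (w := fun n : ℕ =>
      ENNReal.ofReal ((2 * √d) ^ p) * ENNReal.ofReal ((2 : ℝ) ^ (p * n)))
    (norm_sub_rpow_le_add_annulusIndex hp) h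
  simp only [preimage_annulusIndex] at hcost
  refine hcost.trans ((add_le_add (hside ν₀ ν₁) (hside ν₁ ν₀)).trans_eq ?_)
  simp only [annulusDiscrepancy_comm p ν₁ ν₀]
  ring

end DyadicBound

theorem transport_cost_dyadic_bound_general {d : ℕ} (p : ℝ) (hp : 0 < p) :
    ∃ C > (0:ℝ),
      ∀ (ν₀ ν₁ : Measure (EuclideanSpace ℝ (Fin d))) [IsFiniteMeasure ν₀] [IsFiniteMeasure ν₁],
        ν₀ Set.univ = ν₁ Set.univ →
        Tcost p ν₀ ν₁ ≤ ENNReal.ofReal C * ∑' n, annulusDiscrepancy p ν₀ ν₁ n := by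
  set K := ENNReal.ofReal ((2 * √d) ^ p)
  set r := ENNReal.ofReal ((2 : ℝ) ^ (-p))
  have hr0 : r ≠ 0 := (ENNReal.ofReal_pos.2 (by positivity)).ne'
  have hr1 : 1 - r ≠ 0 := (tsub_pos_of_lt (ofReal_two_rpow_neg_lt_one hp)).ne'
  set A := K * (r⁻¹ + (1 - r)⁻¹) + K * 2
  have hA : A ≠ ∞ := by finiteness
  refine ⟨A.toReal + 1, by positivity, fun ν₀ ν₁ _ _ h => ?_⟩
  calc Tcost p ν₀ ν₁
      ≤ Tcost p (fiberOverlap (annulusIndex d) ν₀ ν₁) (fiberOverlap (annulusIndex d) ν₁ ν₀) +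
          Tcost p (fiberExcess (annulusIndex d) ν₀ ν₁) (fiberExcess (annulusIndex d) ν₁ ν₀) :=
        transportCost_le_fiberOverlap_add_fiberExcess measurable_annulusIndex
    _ ≤ A * ∑' n, annulusDiscrepancy p ν₀ ν₁ n := by
        rw [add_mul]
        exact add_le_add (Tcost_overlap_le ν₀ ν₁ hp) (Tcost_excess_le ν₀ ν₁ hp.le h)
    _ ≤ ENNReal.ofReal (A.toReal + 1) * ∑' n, annulusDiscrepancy p ν₀ ν₁ n := by
        gcongr
        exact (ENNReal.le_ofReal_iff_toReal_le hA (by positivity)).2 (by simp)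

/-- **Upper bound for `𝒯_p` (Fournier–Guillin).**  For every `p > 0` there is `C_p > 0`
such that for all probability measures `ν₀, ν₁` on `ℝ^d`,
`𝒯_p(ν₀,ν₁) ≤ C_p ∑_{n≥0} 2^{pn} ∑_{ℓ≥0} 2^{-pℓ} ∑_{F∈𝒫_ℓ} |ν₀(2ⁿF ∩ B_n) - ν₁(2ⁿF ∩ B_n)|`. -/
theorem transport_cost_dyadic_bound {d : ℕ} (p : ℝ) (hp : 0 < p) :
    ∃ C > (0:ℝ),
      ∀ ν₀ ν₁ : Measure (EuclideanSpace ℝ (Fin d)),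
        IsProbabilityMeasure ν₀ → IsProbabilityMeasure ν₁ →
        Tcost p ν₀ ν₁ ≤
          ENNReal.ofReal C *
            ∑' n : ℕ, ENNReal.ofReal ((2 : ℝ) ^ (p * n)) *
              ∑' ℓ : ℕ, ENNReal.ofReal ((2 : ℝ) ^ (-(p * ℓ))) *
                ∑ k : Fin d → Fin (2 ^ ℓ),
                  ENNReal.ofReal
                    |(ν₀ (scaleSet ((2:ℝ) ^ n) (dyadicCube d ℓ k) ∩ annulus d n)).toReal -
                     (ν₁ (scaleSet ((2:ℝ) ^ n) (dyadicCube d ℓ k) ∩ annulus d n)).toReal| := by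
  obtain ⟨C, hC, h⟩ := transport_cost_dyadic_bound_general (d := d) p hp
  exact ⟨C, hC, fun ν₀ ν₁ _ _ => h ν₀ ν₁ (by simp)⟩
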